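/- Let f, g : [0,∞) → [0,∞) with f·g Lebesgue integrable on [a,b], where 0 < a < b < ∞. Let (α₁,m₁), (α₂,m₂) ∈ (0,1]². If f is (α₁,m₁)-GA-concave on [0, max{a^{1/m₁}, b}] and g is (α₂,m₂)-GA-concave on [0, max{a^{1/m₂}, b}], then ∫_a^b f(x)·g(x) dx ≥ (ln b − ln a) · { m₁·m₂·[L(a,b) − G(α₁,1) − G(α₂,1) + G(α₁+α₂,1)]·f(a^{1/m₁})·g(a^{1/m₂}) + m₁·[G(α₂,1) − G(α₁+α₂,1)]·f(a^{1/m₁})·g(b) + m₂·[G(α₁,1) − G(α₁+α₂,1)]·f(b)·g(a^{1/m₂}) + G(α₁+α₂,1)·f(b)·g(b) }. -/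

import Mathlib

open Real MeasureTheory Set

/-- The logarithmic mean `L(x,y) = (y - x)/(ln y - ln x)`. -/
noncomputable def L (x y : ℝ) : ℝ := (y - x) / (Real.log y - Real.log x)

/-- `G(α,ℓ) = ∫_0^1 t^α a^{ℓ(1-t)} b^{ℓ t} dt` (for parameters `a, b`). -/
noncomputable def G (a b α ℓ : ℝ) : ℝ :=
  ∫ t in (0:ℝ)..1, t ^ α * a ^ (ℓ * (1 - t)) * b ^ (ℓ * t)

/-- A function `h` is `(α,m)`-GA-convex on `[0,c]` if
`h(x^λ y^{m(1-λ)}) ≤ λ^α h(x) + m(1-λ^α) h(y)` for all `x, y ∈ [0,c]`, `λ ∈ [0,1]`. -/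
def GAConvexOn (α m c : ℝ) (h : ℝ → ℝ) : Prop :=
  ∀ x ∈ Icc (0:ℝ) c, ∀ y ∈ Icc (0:ℝ) c, ∀ l ∈ Icc (0:ℝ) 1,
    h (x ^ l * y ^ (m * (1 - l))) ≤ l ^ α * h x + m * (1 - l ^ α) * h y

/-- A function `h` is `(α,m)`-GA-concave on `[0,c]` if
`h(x^λ y^{m(1-λ)}) ≥ λ^α h(x) + m(1-λ^α) h(y)` for all `x, y ∈ [0,c]`, `λ ∈ [0,1]`. -/
def GAConcaveOn (α m c : ℝ) (h : ℝ → ℝ) : Prop :=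
  ∀ x ∈ Icc (0:ℝ) c, ∀ y ∈ Icc (0:ℝ) c, ∀ l ∈ Icc (0:ℝ) 1,
    l ^ α * h x + m * (1 - l ^ α) * h y ≤ h (x ^ l * y ^ (m * (1 - l)))

lemma weight_eq (a b t : ℝ) (ha : 0 < a) (hb : 0 < b) :
    a ^ (1 - t) * b ^ t = Real.exp (Real.log a + t * (Real.log b - Real.log a)) := by
  rw [Real.rpow_def_of_pos ha, Real.rpow_def_of_pos hb, ← Real.exp_add]
  congr 1
  ring

lemma subst_int (a b : ℝ) (ha : 0 < a) (hab : a < b) (p : ℝ → ℝ) (hp : Continuous p) :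
    ∫ x in a..b, p ((Real.log x - Real.log a) / (Real.log b - Real.log a)) =
      (Real.log b - Real.log a) * ∫ t in (0:ℝ)..1, p t * (a ^ (1 - t) * b ^ t) := by
  have hb : 0 < b := ha.trans hab
  have hD : 0 < Real.log b - Real.log a := sub_pos.2 (Real.log_lt_log ha hab)
  set D := Real.log b - Real.log a with hDdef
  have hw : ∀ t : ℝ, HasDerivAt (fun t => Real.exp (Real.log a + t * D))
      (Real.exp (Real.log a + t * D) * D) t := by
    intro t
    have h1 : HasDerivAt (fun t : ℝ => Real.log a + t * D) D t := by
      simpa using ((hasDerivAt_id t).mul_const D).const_add (Real.log a)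
    exact h1.exp
  have key := intervalIntegral.integral_comp_mul_deriv'' (a := 0) (b := 1)
    (f := fun t => Real.exp (Real.log a + t * D))
    (f' := fun t => Real.exp (Real.log a + t * D) * D)
    (g := fun x => p ((Real.log x - Real.log a) / D))
    (by fun_prop) (fun t _ => (hw t).hasDerivWithinAt) (by fun_prop)
    (by
      apply hp.comp_continuousOn
      apply ContinuousOn.div_const
      apply ContinuousOn.sub _ continuousOn_const
      apply Real.continuousOn_log.mono
      rintro x ⟨t, _, rfl⟩
      exact (Real.exp_pos _).ne')
  have e0 : Real.exp (Real.log a + 0 * D) = a := by simp [Real.exp_log ha]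
  have e1 : Real.exp (Real.log a + 1 * D) = b := by simp [hDdef, Real.exp_log hb]
  simp only [e0, e1] at key
  rw [← key, ← intervalIntegral.integral_const_mul]
  congr 1
  ext t
  simp only [Function.comp, Real.log_exp]
  rw [weight_eq a b t ha hb, ← hDdef]
  have : (Real.log a + t * D - Real.log a) / D = t := by field_simp; ring
  rw [this]
  ring

lemma lower (h : ℝ → ℝ) (a b α m x : ℝ) (ha : 0 < a) (hab : a < b) (hm : m ∈ Ioc (0:ℝ) 1)
    (hc : GAConcaveOn α m (max (a ^ (1/m)) b) h) (hx : x ∈ Icc a b)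
    (ht : (Real.log x - Real.log a) / (Real.log b - Real.log a) ∈ Icc (0:ℝ) 1) :
    ((Real.log x - Real.log a) / (Real.log b - Real.log a)) ^ α * h b +
      m * (1 - ((Real.log x - Real.log a) / (Real.log b - Real.log a)) ^ α) * h (a ^ (1/m))
      ≤ h x := by
  have hb : 0 < b := ha.trans hab
  have hD : 0 < Real.log b - Real.log a := sub_pos.2 (Real.log_lt_log ha hab)
  have := hc b ⟨hb.le, le_max_right _ _⟩ (a ^ (1/m))
    ⟨(Real.rpow_pos_of_pos ha _).le, le_max_left _ _⟩ _ ht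
  refine this.trans_eq ?_
  congr 1
  rw [← Real.rpow_mul ha.le]
  set t := (Real.log x - Real.log a) / (Real.log b - Real.log a) with htd
  have hm0 : m ≠ 0 := hm.1.ne'
  have e : 1 / m * (m * (1 - t)) = 1 - t := by field_simp
  rw [e, mul_comm, weight_eq a b t ha hb]
  have : t * (Real.log b - Real.log a) = Real.log x - Real.log a := by
    rw [htd]; field_simp
  rw [this, add_sub_cancel, Real.exp_log (ha.trans_le hx.1)]

theorem stmt_18 (f g : ℝ → ℝ) (a b α₁ m₁ α₂ m₂ : ℝ) (ha : 0 < a) (hab : a < b)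
    (hα₁ : α₁ ∈ Ioc (0:ℝ) 1) (hm₁ : m₁ ∈ Ioc (0:ℝ) 1)
    (hα₂ : α₂ ∈ Ioc (0:ℝ) 1) (hm₂ : m₂ ∈ Ioc (0:ℝ) 1)
    (hf0 : ∀ x ∈ Ici (0:ℝ), 0 ≤ f x) (hg0 : ∀ x ∈ Ici (0:ℝ), 0 ≤ g x)
    (hfg : IntervalIntegrable (fun x => f x * g x) volume a b)
    (hfconc : GAConcaveOn α₁ m₁ (max (a ^ (1/m₁)) b) f)
    (hgconc : GAConcaveOn α₂ m₂ (max (a ^ (1/m₂)) b) g) :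
    (Real.log b - Real.log a) *
        (m₁ * m₂ * (L a b - G a b α₁ 1 - G a b α₂ 1 + G a b (α₁ + α₂) 1) *
            f (a ^ (1/m₁)) * g (a ^ (1/m₂)) +
          m₁ * (G a b α₂ 1 - G a b (α₁ + α₂) 1) * f (a ^ (1/m₁)) * g b +
          m₂ * (G a b α₁ 1 - G a b (α₁ + α₂) 1) * f b * g (a ^ (1/m₂)) +
          G a b (α₁ + α₂) 1 * f b * g b) ≤ ∫ x in a..b, f x * g x := by
  have hb : 0 < b := ha.trans hab
  have hD : 0 < Real.log b - Real.log a := sub_pos.2 (Real.log_lt_log ha hab)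
  have hT : ∀ x ∈ Icc a b,
      (Real.log x - Real.log a) / (Real.log b - Real.log a) ∈ Icc (0:ℝ) 1 := by
    intro x hx
    have h1 := Real.log_le_log ha hx.1
    have h2 := Real.log_le_log (ha.trans_le hx.1) hx.2
    exact ⟨div_nonneg (by linarith) hD.le, (div_le_one hD).2 (by linarith)⟩
  have hA : 0 ≤ f (a ^ (1/m₁)) := hf0 _ (Real.rpow_pos_of_pos ha _).le
  have hA' : 0 ≤ g (a ^ (1/m₂)) := hg0 _ (Real.rpow_pos_of_pos ha _).le
  have hB : 0 ≤ f b := hf0 _ hb.le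
  have hB' : 0 ≤ g b := hg0 _ hb.le
  have hlowf := fun x hx => lower f a b α₁ m₁ x ha hab hm₁ hfconc hx (hT x hx)
  have hlowg := fun x hx => lower g a b α₂ m₂ x ha hab hm₂ hgconc hx (hT x hx)
  generalize f (a ^ (1/m₁)) = A at *
  generalize g (a ^ (1/m₂)) = A' at *
  generalize f b = B at *
  generalize g b = B' at *
  have c1 : Continuous fun t : ℝ => t ^ α₁ := Real.continuous_rpow_const hα₁.1.le
  have c2 : Continuous fun t : ℝ => t ^ α₂ := Real.continuous_rpow_const hα₂.1.le
  have hwc : Continuous fun t : ℝ => a ^ (1 - t) * b ^ t := by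
    simp_rw [fun t => weight_eq a b t ha hb]
    fun_prop
  let p : ℝ → ℝ := fun t => (t ^ α₁ * B + m₁ * (1 - t ^ α₁) * A) *
    (t ^ α₂ * B' + m₂ * (1 - t ^ α₂) * A')
  have hp : Continuous p := by fun_prop
  have hsub := subst_int a b ha hab p hp
  have hL : L a b = ∫ t in (0:ℝ)..1, a ^ (1 - t) * b ^ t := by
    have := subst_int a b ha hab (fun _ => 1) continuous_const
    simp only [intervalIntegral.integral_const, smul_eq_mul, mul_one, one_mul] at this
    rw [L, this]
    field_simp
  have hG : ∀ α : ℝ, G a b α 1 = ∫ t in (0:ℝ)..1, t ^ α * (a ^ (1 - t) * b ^ t) := by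
    intro α
    simp only [G, one_mul, mul_assoc]
  have hG12 : G a b (α₁ + α₂) 1 =
      ∫ t in (0:ℝ)..1, t ^ α₁ * t ^ α₂ * (a ^ (1 - t) * b ^ t) := by
    rw [hG]
    apply intervalIntegral.integral_congr
    intro t ht
    rw [uIcc_of_le zero_le_one] at ht
    simp only
    rw [Real.rpow_add_of_nonneg ht.1 hα₁.1.le hα₂.1.le]
  have hmono : ∫ x in a..b, p ((Real.log x - Real.log a) / (Real.log b - Real.log a)) ≤
      ∫ x in a..b, f x * g x := by
    apply intervalIntegral.integral_mono_on hab.le _ hfg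
    · intro x hx
      have ht := hT x hx
      have q2 : 0 ≤ 1 - ((Real.log x - Real.log a) / (Real.log b - Real.log a)) ^ α₂ :=
        sub_nonneg.2 (Real.rpow_le_one ht.1 ht.2 hα₂.1.le)
      exact mul_le_mul (hlowf x hx) (hlowg x hx)
        (add_nonneg (mul_nonneg (Real.rpow_nonneg ht.1 _) hB')
          (mul_nonneg (mul_nonneg hm₂.1.le q2) hA')) (hf0 x (ha.le.trans hx.1))
    · apply ContinuousOn.intervalIntegrable
      apply hp.comp_continuousOn
      apply ContinuousOn.div_const
      apply ContinuousOn.sub _ continuousOn_const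
      apply Real.continuousOn_log.mono
      intro x hx
      rw [uIcc_of_le hab.le] at hx
      exact (ha.trans_le hx.1).ne'
  refine le_trans (le_of_eq ?_) hmono
  rw [hsub, hG12, hG, hG, hL]
  congr 1
  have i0 : IntervalIntegrable (fun t : ℝ => a ^ (1 - t) * b ^ t) volume 0 1 :=
    hwc.intervalIntegrable _ _
  have i1 : IntervalIntegrable (fun t : ℝ => t ^ α₁ * (a ^ (1 - t) * b ^ t)) volume 0 1 :=
    (c1.mul hwc).intervalIntegrable _ _
  have i2 : IntervalIntegrable (fun t : ℝ => t ^ α₂ * (a ^ (1 - t) * b ^ t)) volume 0 1 :=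
    (c2.mul hwc).intervalIntegrable _ _
  have i3 : IntervalIntegrable (fun t : ℝ => t ^ α₁ * t ^ α₂ * (a ^ (1 - t) * b ^ t))
      volume 0 1 := ((c1.mul c2).mul hwc).intervalIntegrable _ _
  have hexp : (fun t => p t * (a ^ (1 - t) * b ^ t)) = fun t : ℝ =>
      (m₁ * m₂ * A * A') * (a ^ (1 - t) * b ^ t) +
      (m₂ * B * A' - m₁ * m₂ * A * A') * (t ^ α₁ * (a ^ (1 - t) * b ^ t)) +
      (m₁ * A * B' - m₁ * m₂ * A * A') * (t ^ α₂ * (a ^ (1 - t) * b ^ t)) +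
      (m₁ * m₂ * A * A' - m₁ * A * B' - m₂ * B * A' + B * B') *
        (t ^ α₁ * t ^ α₂ * (a ^ (1 - t) * b ^ t)) := by
    ext t
    simp only [p]
    ring
  rw [hexp, intervalIntegral.integral_add
      (((i0.const_mul _).add (i1.const_mul _)).add (i2.const_mul _)) (i3.const_mul _),
    intervalIntegral.integral_add ((i0.const_mul _).add (i1.const_mul _)) (i2.const_mul _),
    intervalIntegral.integral_add (i0.const_mul _) (i1.const_mul _)]
  simp only [intervalIntegral.integral_const_mul]
  ring
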